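/- Latent Gaussian process model with Cauchy observation errors: let p ≥ 1, let Σ be a real symmetric positive-definite p × p matrix, and fix y ∈ ℝ^p. For θ ∈ ℝ define on ℝ^p the unnormalised non-centred posterior density g_θ(x̃) = [∏_{i=1}^p 1/(π(1 + (y_i − x̃_i − θ)²))]·exp(−(1/2)·x̃ᵀ Σ^{−1} x̃), and let c_θ = ∫_{ℝ^p} g_θ(x̃) dx̃. Then the model is robust in data (RID): for every x̃ ∈ ℝ^p, g_θ(x̃)/c_θ → exp(−(1/2)·x̃ᵀ Σ^{−1} x̃) / ∫_{ℝ^p} exp(−(1/2)·uᵀ Σ^{−1} u) du as |θ| → ∞; that is, the conditional law of the non-centred missing data X̃ = X − 1θ given Y = y and Θ = θ converges to the N_p(0, Σ) distribution. -/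

import Mathlib

open MeasureTheory Filter

noncomputable section

/-- Unnormalised non-centred posterior density of the latent Gaussian process model with
Cauchy observation errors: Cauchy likelihood factors times the `N_p(0, Σ)` prior. -/
def gDens (p : ℕ) (S : Matrix (Fin p) (Fin p) ℝ) (y : Fin p → ℝ) (θ : ℝ)
    (xt : Fin p → ℝ) : ℝ :=
  (∏ i, 1 / (Real.pi * (1 + (y i - xt i - θ) ^ 2))) *
    Real.exp (-(1 / 2) * dotProduct xt (Matrix.mulVec S⁻¹ xt))

/-! Multiplying the likelihood by `(π (1 + θ²))^p`, which does not depend on `x̃` and so cancels in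
the normalised density, turns each Cauchy factor into `(1 + θ²) / (1 + (yᵢ - x̃ᵢ - θ)²)`. This
ratio tends to `1` as `|θ| → ∞` and, by Peetre's inequality, is at most a constant times `1 + x̃ᵢ²`
uniformly in `θ`. As the Gaussian prior integrates `∏ᵢ (1 + x̃ᵢ²)`, dominated convergence applies to
the normalising constant. -/

open Topology Asymptotics Bornology Matrix

theorem tendsto_mul_div_integral_of_dominated {α Θ : Type*} [MeasurableSpace α] {μ : Measure α}
    {l : Filter Θ} [l.IsCountablyGenerated] {L : Θ → α → ℝ} {k : Θ → ℝ} {b q : α → ℝ}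
    (hk : ∀ᶠ θ in l, k θ ≠ 0) (hL : ∀ᶠ θ in l, AEStronglyMeasurable (L θ) μ)
    (hq : AEStronglyMeasurable q μ) (hbq : Integrable (fun u => b u * q u) μ)
    (hb : ∀ᶠ θ in l, ∀ᵐ u ∂μ, |k θ * L θ u| ≤ b u)
    (hlim : ∀ᵐ u ∂μ, Tendsto (fun θ => k θ * L θ u) l (𝓝 1)) (hq₀ : ∫ u, q u ∂μ ≠ 0)
    {x : α} (hx : Tendsto (fun θ => k θ * L θ x) l (𝓝 1)) :
    Tendsto (fun θ => L θ x * q x / ∫ u, L θ u * q u ∂μ) l (𝓝 (q x / ∫ u, q u ∂μ)) := by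
  have hint : Tendsto (fun θ => ∫ u, k θ * L θ u * q u ∂μ) l (𝓝 (∫ u, q u ∂μ)) := by
    refine tendsto_integral_filter_of_dominated_convergence (fun u => ‖b u * q u‖) ?_ ?_ hbq.norm ?_
    · filter_upwards [hL] with θ hLθ using (hLθ.const_mul (k θ)).mul hq
    · filter_upwards [hb] with θ hbθ
      filter_upwards [hbθ] with u hu
      rw [norm_mul, norm_mul (b u)]
      exact mul_le_mul_of_nonneg_right (hu.trans (le_abs_self _)) (norm_nonneg _)
    · filter_upwards [hlim] with u hu
      simpa using hu.mul_const (q u)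
  have hnum : Tendsto (fun θ => k θ * L θ x * q x) l (𝓝 (q x)) := by
    simpa using hx.mul_const (q x)
  refine (hnum.div hint hq₀).congr' ?_
  filter_upwards [hk] with θ hkθ
  simp only [Pi.div_apply, mul_assoc, integral_const_mul, mul_div_mul_left _ _ hkθ]

/-- Peetre's inequality with exponent `2`. -/
theorem one_add_sub_sq_le {R : Type*} [CommRing R] [LinearOrder R] [IsStrictOrderedRing R]
    (a b : R) : 1 + (a - b) ^ 2 ≤ 2 * (1 + a ^ 2) * (1 + b ^ 2) := by
  linear_combination sq_nonneg (a + b) + 2 * sq_nonneg (a * b) + zero_le_one (α := R)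

theorem isEquivalent_one_add_sub_sq (a : ℝ) :
    (fun θ : ℝ => 1 + (a - θ) ^ 2) ~[cobounded ℝ] fun θ => θ ^ 2 := by
  have hshift : (fun θ : ℝ => a - θ) ~[cobounded ℝ] fun θ => -θ :=
    (isLittleO_const_id_cobounded a).neg_right.add_isEquivalent IsEquivalent.refl
  have hsq : (fun θ : ℝ => (a - θ) ^ 2) ~[cobounded ℝ] fun θ => θ ^ 2 := by
    simpa [Pi.pow_def] using hshift.pow 2
  have hone : (fun _ : ℝ => (1 : ℝ)) =o[cobounded ℝ] fun θ => θ ^ 2 := by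
    have hlin : (fun _ : ℝ => (1 : ℝ)) =o[cobounded ℝ] fun θ : ℝ => θ :=
      isLittleO_const_id_cobounded 1
    simpa using hlin.pow two_pos
  exact hone.add_isEquivalent hsq

theorem tendsto_one_add_sq_div_one_add_sub_sq (a : ℝ) :
    Tendsto (fun θ : ℝ => (1 + θ ^ 2) / (1 + (a - θ) ^ 2)) (cobounded ℝ) (𝓝 1) := by
  have hequiv : (fun θ : ℝ => 1 + θ ^ 2) ~[cobounded ℝ] fun θ => 1 + (a - θ) ^ 2 := by
    simpa using (isEquivalent_one_add_sub_sq 0).trans (isEquivalent_one_add_sub_sq a).symm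
  exact (isEquivalent_iff_tendsto_one (Eventually.of_forall fun θ => by positivity)).1 hequiv

section Likelihood

variable {ι : Type*} [Fintype ι]

/-- The likelihood of the location `θ` and the centred latent vector `x` given the data `y`, when
each `y i` equals `x i + θ` plus an independent standard Cauchy error. -/
def cauchyLikelihood (y : ι → ℝ) (θ : ℝ) (x : ι → ℝ) : ℝ :=
  ∏ i, 1 / (Real.pi * (1 + (y i - x i - θ) ^ 2))

theorem continuous_cauchyLikelihood (y : ι → ℝ) (θ : ℝ) : Continuous (cauchyLikelihood y θ) :=
  continuous_finsetProd _ fun i _ =>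
    continuous_const.div (by fun_prop) fun x => by positivity

theorem pow_card_mul_cauchyLikelihood (y : ι → ℝ) (θ : ℝ) (x : ι → ℝ) :
    (Real.pi * (1 + θ ^ 2)) ^ Fintype.card ι * cauchyLikelihood y θ x =
      ∏ i, (1 + θ ^ 2) / (1 + (y i - x i - θ) ^ 2) := by
  rw [cauchyLikelihood, ← Finset.card_univ, ← Finset.prod_const, ← Finset.prod_mul_distrib]
  refine Finset.prod_congr rfl fun i _ => ?_
  rw [mul_one_div, mul_div_mul_left _ _ Real.pi_ne_zero]

theorem tendsto_pow_card_mul_cauchyLikelihood (y x : ι → ℝ) :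
    Tendsto (fun θ => (Real.pi * (1 + θ ^ 2)) ^ Fintype.card ι * cauchyLikelihood y θ x)
      (cobounded ℝ) (𝓝 1) := by
  simpa [pow_card_mul_cauchyLikelihood] using
    tendsto_finsetProd Finset.univ fun i _ => tendsto_one_add_sq_div_one_add_sub_sq (y i - x i)

theorem abs_pow_card_mul_cauchyLikelihood_le (y : ι → ℝ) (θ : ℝ) (x : ι → ℝ) :
    |(Real.pi * (1 + θ ^ 2)) ^ Fintype.card ι * cauchyLikelihood y θ x| ≤
      (∏ i, 4 * (1 + y i ^ 2)) * ∏ i, (1 + x i ^ 2) := by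
  rw [pow_card_mul_cauchyLikelihood, Finset.abs_prod, ← Finset.prod_mul_distrib]
  refine Finset.prod_le_prod (fun i _ => abs_nonneg _) fun i _ => ?_
  rw [abs_of_nonneg (by positivity), div_le_iff₀ (by positivity)]
  calc 1 + θ ^ 2 = 1 + (y i - x i - (y i - x i - θ)) ^ 2 := by ring
    _ ≤ 2 * (1 + (y i - x i) ^ 2) * (1 + (y i - x i - θ) ^ 2) := one_add_sub_sq_le _ _
    _ ≤ 2 * (2 * (1 + y i ^ 2) * (1 + x i ^ 2)) * (1 + (y i - x i - θ) ^ 2) := by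
      gcongr
      exact one_add_sub_sq_le _ _
    _ = 4 * (1 + y i ^ 2) * (1 + x i ^ 2) * (1 + (y i - x i - θ) ^ 2) := by ring

theorem latent_gaussian_cauchy_rid_general {μ : Measure (ι → ℝ)} {q : (ι → ℝ) → ℝ}
    (hq : Integrable (fun u => (∏ i, (1 + u i ^ 2)) * q u) μ) (hq₀ : ∫ u, q u ∂μ ≠ 0)
    (y x : ι → ℝ) :
    Tendsto (fun θ => cauchyLikelihood y θ x * q x / ∫ u, cauchyLikelihood y θ u * q u ∂μ)
      (cocompact ℝ) (𝓝 (q x / ∫ u, q u ∂μ)) := by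
  have hmeas : AEStronglyMeasurable q μ := by
    have hweight : Continuous fun u : ι → ℝ => ∏ i, (1 + u i ^ 2) := by fun_prop
    exact (aestronglyMeasurable_smul_iff₀ hweight.aestronglyMeasurable
      (ae_of_all _ fun u => by positivity)).1 hq.aestronglyMeasurable
  have hbound : Integrable
      (fun u => (∏ i, 4 * (1 + y i ^ 2)) * (∏ i, (1 + u i ^ 2)) * q u) μ := by
    simpa only [mul_assoc] using hq.const_mul (∏ i, 4 * (1 + y i ^ 2))
  have hcount : (cobounded ℝ).IsCountablyGenerated := comap_norm_atTop (E := ℝ) ▸ inferInstance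
  rw [← Metric.cobounded_eq_cocompact]
  exact tendsto_mul_div_integral_of_dominated
    (k := fun θ => (Real.pi * (1 + θ ^ 2)) ^ Fintype.card ι)
    (Eventually.of_forall fun θ => by positivity)
    (Eventually.of_forall fun θ => (continuous_cauchyLikelihood y θ).aestronglyMeasurable)
    hmeas hbound
    (Eventually.of_forall fun θ => ae_of_all _ (abs_pow_card_mul_cauchyLikelihood_le y θ))
    (ae_of_all _ (tendsto_pow_card_mul_cauchyLikelihood y)) hq₀
    (tendsto_pow_card_mul_cauchyLikelihood y x)

end Likelihood

section Gaussian

variable {ι : Type*} [Fintype ι] {A : Matrix ι ι ℝ}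

open scoped MatrixOrder in
theorem exists_pos_mul_dotProduct_self_le (hA : A.PosDef) :
    ∃ c : ℝ, 0 < c ∧ ∀ u : ι → ℝ, c * (u ⬝ᵥ u) ≤ u ⬝ᵥ A *ᵥ u := by
  classical
  cases isEmpty_or_nonempty ι
  · exact ⟨1, one_pos, by simp⟩
  obtain ⟨c, hc, hcA⟩ := (CFC.exists_pos_algebraMap_le_iff hA.isHermitian).2
    fun r hr => hA.isStrictlyPositive.spectrum_pos hr
  refine ⟨c, hc, fun u => ?_⟩
  have hnonneg := (Matrix.le_iff.1 hcA).dotProduct_mulVec_nonneg u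
  simpa [Algebra.algebraMap_eq_smul_one, sub_mulVec, smul_mulVec] using hnonneg

theorem integrable_one_add_sq_mul_exp_neg_mul_sq {b : ℝ} (hb : 0 < b) :
    Integrable fun x : ℝ => (1 + x ^ 2) * Real.exp (-b * x ^ 2) := by
  have hsq := integrable_rpow_mul_exp_neg_mul_sq hb (s := 2) (by norm_num)
  simpa [add_mul, Pi.add_def] using (integrable_exp_neg_mul_sq hb).add hsq

theorem integrable_prod_one_add_sq_mul_exp_neg_half_dotProduct_mulVec (hA : A.PosDef) :
    Integrable fun u : ι → ℝ =>
      (∏ i, (1 + u i ^ 2)) * Real.exp (-(1 / 2) * (u ⬝ᵥ A *ᵥ u)) := by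
  obtain ⟨c, hc, hcA⟩ := exists_pos_mul_dotProduct_self_le hA
  have hprod : Integrable fun u : ι → ℝ =>
      ∏ i, (1 + u i ^ 2) * Real.exp (-(c / 2) * u i ^ 2) :=
    .fintype_prod fun _ => integrable_one_add_sq_mul_exp_neg_mul_sq (half_pos hc)
  refine hprod.mono' (by fun_prop) (ae_of_all _ fun u => ?_)
  rw [Real.norm_of_nonneg (by positivity), Finset.prod_mul_distrib, ← Real.exp_sum,
    ← Finset.mul_sum]
  have hcu : c * ∑ i, u i ^ 2 ≤ u ⬝ᵥ A *ᵥ u := by simpa [dotProduct, sq] using hcA u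
  gcongr ?_ * Real.exp ?_
  linarith

theorem integral_exp_neg_half_dotProduct_mulVec_pos (hA : A.PosDef) :
    0 < ∫ u : ι → ℝ, Real.exp (-(1 / 2) * (u ⬝ᵥ A *ᵥ u)) := by
  refine integral_exp_pos ((integrable_prod_one_add_sq_mul_exp_neg_half_dotProduct_mulVec hA).mono'
    (by fun_prop) (ae_of_all _ fun u => ?_))
  rw [Real.norm_of_nonneg (Real.exp_pos _).le]
  refine le_mul_of_one_le_left (Real.exp_pos _).le (Finset.one_le_prod fun i _ => ?_)
  exact le_add_of_nonneg_right (sq_nonneg _)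

end Gaussian

/-- the latent Gaussian process model with Cauchy observation errors is
robust in data (RID): as `|θ| → ∞`, the conditional posterior density of the non-centred
missing data `X̃ = X - 1θ` converges pointwise to the `N_p(0, Σ)` density. -/
theorem latent_gaussian_cauchy_rid (p : ℕ) (hp : 1 ≤ p)
    (S : Matrix (Fin p) (Fin p) ℝ) (hS : S.PosDef) (y : Fin p → ℝ) :
    ∀ xt : Fin p → ℝ,
      Tendsto (fun θ => gDens p S y θ xt / ∫ u : Fin p → ℝ, gDens p S y θ u)
        (cocompact ℝ)
        (nhds (Real.exp (-(1 / 2) * dotProduct xt (Matrix.mulVec S⁻¹ xt)) /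
          ∫ u : Fin p → ℝ,
            Real.exp (-(1 / 2) * dotProduct u (Matrix.mulVec S⁻¹ u)))) := by
  exact latent_gaussian_cauchy_rid_general
    (integrable_prod_one_add_sq_mul_exp_neg_half_dotProduct_mulVec hS.inv)
    (integral_exp_neg_half_dotProduct_mulVec_pos hS.inv).ne' y
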